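/- Assume a21 > 0 and a32 > 0. Let m, n be integers such that for every integer t ≥ 0 the matrix A_t = H(m − t, n) has one real eigenvalue and two non-real complex conjugate eigenvalues. Then for every ε > 0 there exists C > 0 such that for every integer t > C and every choice of eigenbasis (g1,g2,g3) for A_t, the convex hull of T_{A_t}((1,0,0)) ∪ T_{A_t}((a11,a21,0)) is contained in the ε-tubular neighborhood of the convex hull of the three points (1,0,0), (a11,a21,0), (−a11,−a21,0). -/

import Mathlib

open Polynomial

/-- A real 3×3 matrix has NRS-spectrum if its characteristic polynomial has one
real root and a pair of non-real complex conjugate roots. -/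
def HasNRSSpectrum (A : Matrix (Fin 3) (Fin 3) ℝ) : Prop :=
  ∃ (r : ℝ) (z : ℂ), z.im ≠ 0 ∧
    A.charpoly.map (algebraMap ℝ ℂ) =
      (X - C (r : ℂ)) * (X - C z) * (X - C ((starRingEnd ℂ) z))

/-- An eigenbasis (g1,g2,g3) for A: g1 is a real eigenvector and g2, g3 are the
real and imaginary parts of a complex eigenvector; the three vectors form a
basis of ℝ³. -/
def IsEigenbasis (A : Matrix (Fin 3) (Fin 3) ℝ) (g1 g2 g3 : Fin 3 → ℝ) : Prop :=
  g1 ≠ 0 ∧ (∃ r : ℝ, A.mulVec g1 = r • g1) ∧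
  (∃ (c : ℂ) (v : Fin 3 → ℂ), v ≠ 0 ∧
      (A.map (Complex.ofReal : ℝ → ℂ)).mulVec v = c • v ∧
      g2 = (fun i => (v i).re) ∧ g3 = (fun i => (v i).im)) ∧
  LinearIndependent ℝ ![g1, g2, g3]

/-- The Klein–Voronoi orbit T_A(v) of a point v = x·g1 + y·g2 + z·g3, written in
the eigenbasis (g1,g2,g3). -/
def KVorbit (g1 g2 g3 v : Fin 3 → ℝ) : Set (Fin 3 → ℝ) :=
  { p | ∃ x y z θ : ℝ, v = x • g1 + y • g2 + z • g3 ∧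
      p = x • g1 + (y * Real.cos θ + z * Real.sin θ) • g2 +
            (-y * Real.sin θ + z * Real.cos θ) • g3 }

/-- Euclidean distance on ℝ³ (as `Fin 3 → ℝ`). -/
noncomputable def euclDist (p q : Fin 3 → ℝ) : ℝ :=
  Real.sqrt (∑ i, (p i - q i) ^ 2)

/-- The ε-tubular neighborhood of a set: points at Euclidean distance < ε from it. -/
def tubNbhd (ε : ℝ) (S : Set (Fin 3 → ℝ)) : Set (Fin 3 → ℝ) :=
  { p | ∃ q ∈ S, euclDist p q < ε }

/-- The family H(m,n) of Hessenberg type ⟨a11,a21|a12,a22,a32⟩, over ℤ. -/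
def Hmat (a11 a12 a13 a21 a22 a23 a32 a33 m n : ℤ) : Matrix (Fin 3) (Fin 3) ℤ :=
  !![a11, a12, a11 * m + a12 * n + a13;
     a21, a22, a21 * m + a22 * n + a23;
     0,   a32, a32 * n + a33]

/-!
In a real Jordan basis for the eigenvalues `r` and `α ± β i`, the orbit of `v` consists of the
points `u + cos θ • w + sin θ • j`, where `v = u + w` splits `v` along the real eigenline and the
invariant plane, and `β • j = (A - α) w`. Along the ray the trace and the determinant of `A` are
fixed while the second coefficient `σ = 2rα + α² + β²` of the characteristic polynomial tends to
infinity; hence `r → 0`, `α` stays bounded and `|β| → ∞`.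

If `v`, `A v` and `A² v` are bounded, then so is `((α - r)² + β²) w`, and therefore both `w` and `j`
tend to `0`: the orbit of `v` shrinks to `v`. For the orbit of `A v`, the Cayley–Hamilton theorem
eliminates `A³ v` and gives the same for `u` in place of `w`: the orbit collapses to the segment
of the points `cos θ • A v`.
-/

open Matrix Metric

section Charpoly

variable {R : Type*} [CommRing R] (A : Matrix (Fin 3) (Fin 3) R)

theorem charpoly_fin_three :
    A.charpoly = X ^ 3 - C A.trace * X ^ 2
      + C (A 0 0 * A 1 1 - A 0 1 * A 1 0 + A 0 0 * A 2 2 - A 0 2 * A 2 0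
        + A 1 1 * A 2 2 - A 1 2 * A 2 1) * X - C A.det := by
  simp only [charpoly, det_fin_three, charmatrix_apply, trace_fin_three, diagonal_apply, map_add,
    map_sub, map_mul, Fin.isValue, Fin.reduceEq, if_true, if_false]
  ring

theorem charpoly_coeff_one_fin_three :
    A.charpoly.coeff 1 = A 0 0 * A 1 1 - A 0 1 * A 1 0 + A 0 0 * A 2 2 - A 0 2 * A 2 0
      + A 1 1 * A 2 2 - A 1 2 * A 2 1 := by
  simp [charpoly_fin_three, coeff_X_pow, coeff_C]

theorem mulVec_pow_three (v : Fin 3 → R) :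
    A *ᵥ A *ᵥ A *ᵥ v = A.trace • A *ᵥ A *ᵥ v - A.charpoly.coeff 1 • A *ᵥ v + A.det • v := by
  have cayleyHamilton := congrArg (· *ᵥ v) A.aeval_self_charpoly
  rw [charpoly_fin_three, ← charpoly_coeff_one_fin_three] at cayleyHamilton
  simp only [pow_succ, pow_zero, one_mul, map_sub, map_add, map_mul, aeval_X, aeval_C,
    Algebra.algebraMap_eq_smul_one, Algebra.smul_mul_assoc, sub_mulVec, add_mulVec, smul_mulVec,
    one_mulVec, zero_mulVec, ← mulVec_mulVec] at cayleyHamilton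
  linear_combination (norm := module) cayleyHamilton

end Charpoly

/-- `A` acts on the basis `(g1, g2, g3)` by its real Jordan form with eigenvalues `r` and
`α ± β i`. -/
structure IsRealJordanBasis (A : Matrix (Fin 3) (Fin 3) ℝ) (g1 g2 g3 : Fin 3 → ℝ)
    (r α β : ℝ) : Prop where
  linearIndependent : LinearIndependent ℝ ![g1, g2, g3]
  mulVec_fst : A *ᵥ g1 = r • g1
  mulVec_snd : A *ᵥ g2 = α • g2 - β • g3
  mulVec_trd : A *ᵥ g3 = β • g2 + α • g3

theorem IsEigenbasis.exists_isRealJordanBasis {A : Matrix (Fin 3) (Fin 3) ℝ}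
    {g1 g2 g3 : Fin 3 → ℝ} (hg : IsEigenbasis A g1 g2 g3) :
    ∃ r α β : ℝ, IsRealJordanBasis A g1 g2 g3 r α β := by
  obtain ⟨-, ⟨r, hr⟩, ⟨c, v, -, hv, rfl, rfl⟩, hli⟩ := hg
  refine ⟨r, c.re, c.im, hli, hr, ?_, ?_⟩
  · ext i
    have := congrArg Complex.re (congrFun hv i)
    simpa [mulVec, dotProduct] using this
  · ext i
    have := congrArg Complex.im (congrFun hv i)
    simpa [mulVec, dotProduct, add_comm] using this

namespace IsRealJordanBasis

variable {A : Matrix (Fin 3) (Fin 3) ℝ} {g1 g2 g3 v p : Fin 3 → ℝ} {r α β B N : ℝ}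

theorem exists_basis_toMatrix (h : IsRealJordanBasis A g1 g2 g3 r α β) :
    ∃ b : Module.Basis (Fin 3) ℝ (Fin 3 → ℝ),
      LinearMap.toMatrix b b A.toLin' = !![r, 0, 0; 0, α, β; 0, -β, α] := by
  let b := basisOfLinearIndependentOfCardEqFinrank h.linearIndependent (by simp)
  have hb : ⇑b = ![g1, g2, g3] := coe_basisOfLinearIndependentOfCardEqFinrank _ _
  refine ⟨b, (LinearMap.toMatrix b b).symm.injective ?_⟩
  rw [LinearEquiv.symm_apply_apply, LinearMap.toMatrix_symm]
  refine b.ext fun i => ?_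
  rw [toLin_self]
  fin_cases i
  · simp [hb, Fin.sum_univ_three, h.mulVec_fst]
  · simp [hb, Fin.sum_univ_three, h.mulVec_snd, sub_eq_add_neg]
  · simp [hb, Fin.sum_univ_three, h.mulVec_trd]

theorem trace_eq (h : IsRealJordanBasis A g1 g2 g3 r α β) : A.trace = r + 2 * α := by
  obtain ⟨b, hb⟩ := h.exists_basis_toMatrix
  rw [← trace_toLin'_eq, LinearMap.trace_eq_matrix_trace ℝ b, hb, trace_fin_three]
  simp only [of_apply, cons_val]
  ring

theorem det_eq (h : IsRealJordanBasis A g1 g2 g3 r α β) : A.det = r * (α ^ 2 + β ^ 2) := by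
  obtain ⟨b, hb⟩ := h.exists_basis_toMatrix
  rw [← LinearMap.det_toLin', ← LinearMap.det_toMatrix b, hb, det_fin_three]
  simp only [of_apply, cons_val]
  ring

theorem charpoly_coeff_one_eq (h : IsRealJordanBasis A g1 g2 g3 r α β) :
    A.charpoly.coeff 1 = 2 * r * α + α ^ 2 + β ^ 2 := by
  obtain ⟨b, hb⟩ := h.exists_basis_toMatrix
  rw [← charpoly_toLin', ← LinearMap.charpoly_toMatrix _ b, hb, charpoly_coeff_one_fin_three]
  simp only [of_apply, cons_val]
  ring

/-- Here `u` is the component of `v` along `g1`, and `j` is `v - u` turned by a right angle with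
respect to `(g2, g3)`. -/
theorem exists_of_mem_KVorbit (h : IsRealJordanBasis A g1 g2 g3 r α β)
    (hp : p ∈ KVorbit g1 g2 g3 v) :
    ∃ (u j : Fin 3 → ℝ) (θ : ℝ), p = u + Real.cos θ • (v - u) + Real.sin θ • j ∧
      ((α - r) ^ 2 + β ^ 2) • u = A *ᵥ A *ᵥ v - (2 * α) • A *ᵥ v + (α ^ 2 + β ^ 2) • v ∧
      β • j = A *ᵥ v - α • v + (α - r) • u := by
  obtain ⟨x, y, z, θ, rfl, rfl⟩ := hp
  refine ⟨x • g1, z • g2 - y • g3, θ, by module, ?_, ?_⟩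
  all_goals
    simp only [mulVec_add, mulVec_sub, mulVec_smul, h.mulVec_fst, h.mulVec_snd, h.mulVec_trd]
    module

theorem eigenvalue_bounds (h : IsRealJordanBasis A g1 g2 g3 r α β) (hB : 1 ≤ B) (hBN : B ≤ N)
    (htrace : |A.trace| ≤ B) (hdet : |A.det| ≤ B) (hcoeff : N ^ 2 + B ^ 2 ≤ A.charpoly.coeff 1) :
    |r| ≤ 1 ∧ |α| ≤ B ∧ N ≤ |β| := by
  rw [h.trace_eq] at htrace
  rw [h.det_eq] at hdet
  rw [h.charpoly_coeff_one_eq] at hcoeff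
  have hβ_sq : N ^ 2 ≤ β ^ 2 := by
    have htrace_sq : (r + 2 * α) ^ 2 ≤ B ^ 2 := sq_le_sq' (abs_le.1 htrace).1 (abs_le.1 htrace).2
    nlinarith [sq_nonneg (r + α)]
  have hr : |r| ≤ 1 := by
    have hpos : 0 < α ^ 2 + β ^ 2 := by nlinarith [sq_nonneg α]
    rw [abs_mul, abs_of_pos hpos] at hdet
    refine le_of_mul_le_mul_right (hdet.trans ?_) hpos
    nlinarith [sq_nonneg α]
  refine ⟨hr, ?_, (le_abs_self N).trans (sq_le_sq.1 hβ_sq)⟩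
  rw [abs_le] at hr htrace ⊢
  constructor <;> linarith

end IsRealJordanBasis

theorem mul_norm_smul_add_smul_le {E : Type*} [SeminormedAddCommGroup E] [NormedSpace ℝ E]
    {B N a β c s : ℝ} {x j : E} (hB : 1 ≤ B) (hN : 1 ≤ N) (hβ : N ≤ |β|) (ha : |a| ≤ 2 * B)
    (hx : ‖(a ^ 2 + β ^ 2) • x‖ ≤ 6 * B ^ 2) (hj : ‖β • j - a • x‖ ≤ 2 * B ^ 2)
    (hc : |c| ≤ 2) (hs : |s| ≤ 1) : N * ‖c • x + s • j‖ ≤ 26 * B ^ 3 := by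
  have hNx : N * ‖x‖ ≤ 6 * B ^ 2 := by
    have hQ : N ≤ a ^ 2 + β ^ 2 := by nlinarith [sq_nonneg a, sq_abs β]
    rw [norm_smul, Real.norm_of_nonneg (by positivity)] at hx
    exact (mul_le_mul_of_nonneg_right hQ (norm_nonneg x)).trans hx
  have hx_le : ‖x‖ ≤ 6 * B ^ 2 := (le_mul_of_one_le_left (norm_nonneg x) hN).trans hNx
  have hNj : N * ‖j‖ ≤ 2 * B ^ 2 + 2 * B * (6 * B ^ 2) :=
    calc N * ‖j‖ ≤ |β| * ‖j‖ := by gcongr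
      _ = ‖β • j‖ := (norm_smul β j).symm
      _ ≤ ‖β • j - a • x‖ + ‖a • x‖ := norm_le_norm_sub_add _ _
      _ = ‖β • j - a • x‖ + |a| * ‖x‖ := by rw [norm_smul, Real.norm_eq_abs]
      _ ≤ 2 * B ^ 2 + 2 * B * (6 * B ^ 2) := by gcongr
  calc N * ‖c • x + s • j‖ ≤ N * (|c| * ‖x‖ + |s| * ‖j‖) := by
        gcongr
        simpa only [norm_smul, Real.norm_eq_abs] using norm_add_le (c • x) (s • j)
    _ ≤ N * (2 * ‖x‖ + 1 * ‖j‖) := by gcongr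
    _ = 2 * (N * ‖x‖) + N * ‖j‖ := by ring
    _ ≤ 2 * (6 * B ^ 2) + (2 * B ^ 2 + 2 * B * (6 * B ^ 2)) := by gcongr
    _ ≤ 26 * B ^ 3 := by nlinarith [pow_le_pow_right₀ hB (by norm_num : 2 ≤ 3)]

theorem norm_smul_add_smul_add_smul_le {E : Type*} [SeminormedAddCommGroup E] [NormedSpace ℝ E]
    {B a b c K L M : ℝ} {x y z : E} (ha : |a| ≤ K) (hb : |b| ≤ L) (hc : |c| ≤ M)
    (hx : ‖x‖ ≤ B) (hy : ‖y‖ ≤ B) (hz : ‖z‖ ≤ B) :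
    ‖a • x + b • y + c • z‖ ≤ (K + L + M) * B := by
  have hK := (abs_nonneg a).trans ha
  have hL := (abs_nonneg b).trans hb
  have hM := (abs_nonneg c).trans hc
  calc ‖a • x + b • y + c • z‖ ≤ ‖a • x‖ + ‖b • y‖ + ‖c • z‖ := norm_add₃_le
    _ = |a| * ‖x‖ + |b| * ‖y‖ + |c| * ‖z‖ := by simp only [norm_smul, Real.norm_eq_abs]
    _ ≤ K * B + L * B + M * B := by gcongr
    _ = (K + L + M) * B := by ring

namespace IsRealJordanBasis

variable {A : Matrix (Fin 3) (Fin 3) ℝ} {g1 g2 g3 v p : Fin 3 → ℝ} {r α β B N : ℝ}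

theorem mul_norm_sub_le_of_mem_KVorbit (h : IsRealJordanBasis A g1 g2 g3 r α β) (hB : 1 ≤ B)
    (hN : 1 ≤ N) (hr : |r| ≤ 1) (hα : |α| ≤ B) (hβ : N ≤ |β|) (hv : ‖v‖ ≤ B)
    (hAv : ‖A *ᵥ v‖ ≤ B) (hAAv : ‖A *ᵥ A *ᵥ v‖ ≤ B) (hp : p ∈ KVorbit g1 g2 g3 v) :
    N * ‖p - v‖ ≤ 26 * B ^ 3 := by
  obtain ⟨u, j, θ, rfl, hu, hj⟩ := h.exists_of_mem_KVorbit hp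
  have hw : ((r - α) ^ 2 + β ^ 2) • (v - u)
      = (-1 : ℝ) • A *ᵥ A *ᵥ v + (2 * α) • A *ᵥ v + (r ^ 2 - 2 * (r * α)) • v := by
    rw [smul_sub, ← neg_sub α r, neg_sq, hu]
    module
  have hj' : β • j - (r - α) • (v - u)
      = (0 : ℝ) • A *ᵥ A *ᵥ v + (1 : ℝ) • A *ᵥ v + (-r) • v := by
    rw [hj]
    module
  have hrα : |r * α| ≤ B := by
    rw [abs_mul]
    exact (mul_le_of_le_one_left (abs_nonneg α) hr).trans hα
  have hr_sq : |r ^ 2| ≤ 1 := by rwa [abs_sq, sq_le_one_iff_abs_le_one]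
  have hnorm_w : ‖((r - α) ^ 2 + β ^ 2) • (v - u)‖ ≤ 6 * B ^ 2 := by
    rw [hw]
    refine (norm_smul_add_smul_add_smul_le (K := 1) (L := 2 * B) (M := 1 + 2 * B) (by simp) ?_ ?_
      hAAv hAv hv).trans (by nlinarith)
    · rw [abs_mul, abs_two]
      gcongr
    · refine (abs_sub _ _).trans ?_
      rw [abs_mul 2, abs_two]
      gcongr
  have hnorm_j : ‖β • j - (r - α) • (v - u)‖ ≤ 2 * B ^ 2 := by
    rw [hj']
    exact (norm_smul_add_smul_add_smul_le abs_zero.le abs_one.le ((abs_neg r).trans_le hr)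
      hAAv hAv hv).trans (by nlinarith)
  have hcos : |Real.cos θ - 1| ≤ 2 := by
    rw [abs_le]
    constructor <;> linarith [Real.neg_one_le_cos θ, Real.cos_le_one θ]
  have hdisp : u + Real.cos θ • (v - u) + Real.sin θ • j - v
      = (Real.cos θ - 1) • (v - u) + Real.sin θ • j := by module
  rw [hdisp]
  exact mul_norm_smul_add_smul_le hB hN hβ ((abs_sub r α).trans (by linarith)) hnorm_w hnorm_j
    hcos (Real.abs_sin_le_one θ)

theorem exists_mul_norm_sub_cos_smul_mulVec_le (h : IsRealJordanBasis A g1 g2 g3 r α β) (hB : 1 ≤ B)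
    (hN : 1 ≤ N) (hr : |r| ≤ 1) (hα : |α| ≤ B) (hβ : N ≤ |β|) (hdet : |A.det| ≤ B)
    (hv : ‖v‖ ≤ B) (hAv : ‖A *ᵥ v‖ ≤ B) (hAAv : ‖A *ᵥ A *ᵥ v‖ ≤ B)
    (hp : p ∈ KVorbit g1 g2 g3 (A *ᵥ v)) :
    ∃ θ : ℝ, N * ‖p - Real.cos θ • A *ᵥ v‖ ≤ 26 * B ^ 3 := by
  obtain ⟨u, j, θ, rfl, hu, hj⟩ := h.exists_of_mem_KVorbit hp
  refine ⟨θ, ?_⟩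
  have hu' : ((α - r) ^ 2 + β ^ 2) • u
      = r • A *ᵥ A *ᵥ v + (-(2 * (r * α))) • A *ᵥ v + A.det • v := by
    rw [hu, mulVec_pow_three, h.trace_eq, h.charpoly_coeff_one_eq]
    module
  have hj' : β • j - (α - r) • u = (1 : ℝ) • A *ᵥ A *ᵥ v + (-α) • A *ᵥ v + (0 : ℝ) • v := by
    rw [hj]
    module
  have hnorm_u : ‖((α - r) ^ 2 + β ^ 2) • u‖ ≤ 6 * B ^ 2 := by
    rw [hu']
    refine (norm_smul_add_smul_add_smul_le hr (L := 2 * (1 * B)) ?_ hdet hAAv hAv hv).trans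
      (by nlinarith)
    rw [abs_neg, abs_mul, abs_mul, abs_two]
    gcongr
  have hnorm_j : ‖β • j - (α - r) • u‖ ≤ 2 * B ^ 2 := by
    rw [hj']
    exact (norm_smul_add_smul_add_smul_le abs_one.le ((abs_neg α).trans_le hα) abs_zero.le
      hAAv hAv hv).trans (by nlinarith)
  have hcos : |1 - Real.cos θ| ≤ 2 := by
    rw [abs_le]
    constructor <;> linarith [Real.neg_one_le_cos θ, Real.cos_le_one θ]
  have hdisp : u + Real.cos θ • (A *ᵥ v - u) + Real.sin θ • j - Real.cos θ • A *ᵥ v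
      = (1 - Real.cos θ) • u + Real.sin θ • j := by module
  rw [hdisp]
  exact mul_norm_smul_add_smul_le hB hN hβ ((abs_sub α r).trans (by linarith)) hnorm_u hnorm_j
    hcos (Real.abs_sin_le_one θ)

end IsRealJordanBasis

theorem smul_mem_of_convex_of_neg_mem {E : Type*} [AddCommGroup E] [Module ℝ E] {s : Set E}
    (hs : Convex ℝ s) {x : E} {c : ℝ} (hx : x ∈ s) (hneg : -x ∈ s) (hc : |c| ≤ 1) :
    c • x ∈ s := by
  rw [abs_le] at hc
  convert hs hx hneg (a := (1 + c) / 2) (b := (1 - c) / 2) (by linarith) (by linarith) (by ring)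
    using 1
  module

theorem euclDist_le_two_mul_dist (p q : Fin 3 → ℝ) : euclDist p q ≤ 2 * dist p q := by
  have hcoord (i : Fin 3) : (p i - q i) ^ 2 ≤ dist p q ^ 2 := by
    rw [← sq_abs, ← Real.dist_eq]
    exact pow_le_pow_left₀ dist_nonneg (dist_le_pi_dist p q i) 2
  refine Real.sqrt_le_iff.2 ⟨by positivity, ?_⟩
  rw [Fin.sum_univ_three]
  linarith [hcoord 0, hcoord 1, hcoord 2, sq_nonneg (dist p q)]

theorem thickening_half_subset_tubNbhd (ε : ℝ) (S : Set (Fin 3 → ℝ)) :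
    thickening (ε / 2) S ⊆ tubNbhd ε S := fun p hp => by
  obtain ⟨q, hq, hpq⟩ := mem_thickening_iff.1 hp
  exact ⟨q, hq, (euclDist_le_two_mul_dist p q).trans_lt (by linarith)⟩

theorem IsEigenbasis.convexHull_KVorbit_subset_thickening {A : Matrix (Fin 3) (Fin 3) ℝ}
    {g1 g2 g3 v : Fin 3 → ℝ} {B N δ : ℝ} (hg : IsEigenbasis A g1 g2 g3) (hB : 1 ≤ B)
    (hBN : B ≤ N) (htrace : |A.trace| ≤ B) (hdet : |A.det| ≤ B)
    (hcoeff : N ^ 2 + B ^ 2 ≤ A.charpoly.coeff 1) (hv : ‖v‖ ≤ B) (hAv : ‖A *ᵥ v‖ ≤ B)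
    (hAAv : ‖A *ᵥ A *ᵥ v‖ ≤ B) (hδ : 26 * B ^ 3 < N * δ) :
    convexHull ℝ (KVorbit g1 g2 g3 v ∪ KVorbit g1 g2 g3 (A *ᵥ v)) ⊆
      thickening δ (convexHull ℝ {v, A *ᵥ v, -(A *ᵥ v)}) := by
  obtain ⟨r, α, β, h⟩ := hg.exists_isRealJordanBasis
  obtain ⟨hr, hα, hβ⟩ := h.eigenvalue_bounds hB hBN htrace hdet hcoeff
  have hN : 1 ≤ N := hB.trans hBN
  have hull_convex := convex_convexHull ℝ {v, A *ᵥ v, -(A *ᵥ v)}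
  have vertex_mem := subset_convexHull ℝ {v, A *ᵥ v, -(A *ᵥ v)}
  have mem_of_norm_le {p q : Fin 3 → ℝ} (hq : q ∈ convexHull ℝ {v, A *ᵥ v, -(A *ᵥ v)})
      (hpq : N * ‖p - q‖ ≤ 26 * B ^ 3) :
      p ∈ thickening δ (convexHull ℝ {v, A *ᵥ v, -(A *ᵥ v)}) := by
    refine mem_thickening_iff.2 ⟨q, hq, ?_⟩
    rw [dist_eq_norm]
    exact lt_of_mul_lt_mul_left (hpq.trans_lt hδ) (by linarith)
  refine convexHull_min ?_ (hull_convex.thickening δ)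
  rintro p (hp | hp)
  · exact mem_of_norm_le (vertex_mem (by simp))
      (h.mul_norm_sub_le_of_mem_KVorbit hB hN hr hα hβ hv hAv hAAv hp)
  · obtain ⟨θ, hθ⟩ := h.exists_mul_norm_sub_cos_smul_mulVec_le hB hN hr hα hβ hdet hv hAv hAAv hp
    exact mem_of_norm_le (smul_mem_of_convex_of_neg_mem hull_convex (vertex_mem (by simp))
      (vertex_mem (by simp)) (Real.abs_cos_le_one θ)) hθ

theorem exists_forall_convexHull_KVorbit_subset_tubNbhd (B : ℝ) {ε : ℝ} (hε : 0 < ε) :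
    ∃ S : ℝ, ∀ (A : Matrix (Fin 3) (Fin 3) ℝ) (g1 g2 g3 v : Fin 3 → ℝ), IsEigenbasis A g1 g2 g3 →
      |A.trace| ≤ B → |A.det| ≤ B → ‖v‖ ≤ B → ‖A *ᵥ v‖ ≤ B → ‖A *ᵥ A *ᵥ v‖ ≤ B →
      S ≤ A.charpoly.coeff 1 →
      convexHull ℝ (KVorbit g1 g2 g3 v ∪ KVorbit g1 g2 g3 (A *ᵥ v)) ⊆
        tubNbhd ε (convexHull ℝ {v, A *ᵥ v, -(A *ᵥ v)}) := by
  wlog hB : 1 ≤ B generalizing B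
  · obtain ⟨S, hS⟩ := this 1 le_rfl
    have hB1 := (not_le.1 hB).le
    exact ⟨S, fun A g1 g2 g3 v hg htrace hdet hv hAv hAAv => hS A g1 g2 g3 v hg
      (htrace.trans hB1) (hdet.trans hB1) (hv.trans hB1) (hAv.trans hB1) (hAAv.trans hB1)⟩
  let N := B + 26 * B ^ 3 / (ε / 2)
  have hBN : B ≤ N := le_add_of_nonneg_right (by positivity)
  have hNε : 26 * B ^ 3 < N * (ε / 2) := by
    rw [add_mul, div_mul_cancel₀ _ (by positivity)]
    exact lt_add_of_pos_left _ (by positivity)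
  exact ⟨N ^ 2 + B ^ 2, fun A g1 g2 g3 v hg htrace hdet hv hAv hAAv hcoeff =>
    (hg.convexHull_KVorbit_subset_thickening hB hBN htrace hdet hcoeff hv hAv hAAv hNε).trans
      (thickening_half_subset_tubNbhd ε _)⟩

section Transvection

variable {R n : Type*} [CommRing R] [Fintype n] [DecidableEq n]

theorem transvection_mulVec_of_apply_eq_zero (i : n) {j : n} (c : R) {v : n → R} (hv : v j = 0) :
    transvection i j c *ᵥ v = v := by
  simp [transvection, add_mulVec, single_mulVec, hv]

theorem trace_mul_transvection (A : Matrix n n R) (i j : n) (c : R) :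
    (A * transvection i j c).trace = A.trace + A j i * c := by
  rw [transvection, mul_add, mul_one, trace_add, trace_mul_single, op_smul_eq_mul]

theorem charpoly_coeff_one_mul_transvection {A : Matrix (Fin 3) (Fin 3) R} (hA : A 2 0 = 0)
    (c : R) : (A * transvection 0 2 c).charpoly.coeff 1
      = A.charpoly.coeff 1 - c * (A 1 0 * A 2 1) := by
  simp only [charpoly_coeff_one_fin_three, mul_transvection_apply_same, hA, ne_eq, Fin.reduceEq,
    not_false_eq_true, mul_transvection_apply_of_ne]
  ring

end Transvection

theorem orbit_hull_flattens_general_dir_neg_general (A : Matrix (Fin 3) (Fin 3) ℝ)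
    (hA : A 2 0 = 0) (hpos : 0 < A 1 0 * A 2 1) {ε : ℝ} (hε : 0 < ε) :
    ∃ C : ℝ, 0 < C ∧ ∀ t : ℝ, C < t → ∀ g1 g2 g3 : Fin 3 → ℝ,
      IsEigenbasis (A * transvection 0 2 (-t)) g1 g2 g3 →
      convexHull ℝ (KVorbit g1 g2 g3 ![1, 0, 0] ∪ KVorbit g1 g2 g3 (A.col 0)) ⊆
        tubNbhd ε (convexHull ℝ {![1, 0, 0], A.col 0, -A.col 0}) := by
  set e : Fin 3 → ℝ := ![1, 0, 0]
  have hAe : A *ᵥ e = A.col 0 := by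
    ext i
    simp [e, mulVec, dotProduct, Fin.sum_univ_three]
  let B := |A.trace| + |A.det| + ‖e‖ + ‖A.col 0‖ + ‖A *ᵥ A.col 0‖
  obtain ⟨S, hS⟩ := exists_forall_convexHull_KVorbit_subset_tubNbhd B hε
  refine ⟨max 1 ((S - A.charpoly.coeff 1) / (A 1 0 * A 2 1)), by positivity,
    fun t ht g1 g2 g3 hg => ?_⟩
  set M := A * transvection 0 2 (-t)
  have htrace : M.trace = A.trace := by rw [trace_mul_transvection, hA, zero_mul, add_zero]
  have hdet : M.det = A.det := by rw [det_mul, det_transvection_of_ne _ _ (by decide), mul_one]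
  have hcoeff : S ≤ M.charpoly.coeff 1 := by
    rw [charpoly_coeff_one_mul_transvection hA]
    linarith [(div_lt_iff₀ hpos).1 ((le_max_right _ _).trans_lt ht)]
  have hmulVec {v : Fin 3 → ℝ} (hv : v 2 = 0) : M *ᵥ v = A *ᵥ v := by
    rw [← mulVec_mulVec, transvection_mulVec_of_apply_eq_zero 0 (-t) hv]
  have hMe : M *ᵥ e = A.col 0 := (hmulVec rfl).trans hAe
  have hMb : M *ᵥ A.col 0 = A *ᵥ A.col 0 := hmulVec hA
  rw [← hMe]
  refine hS M g1 g2 g3 e hg ?_ ?_ ?_ ?_ ?_ hcoeff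
  all_goals
    simp only [htrace, hdet, hMe, hMb, B]
    linarith [abs_nonneg A.trace, abs_nonneg A.det, norm_nonneg e, norm_nonneg (A.col 0),
      norm_nonneg (A *ᵥ A.col 0)]

theorem Hmat_map_intCast_col_zero (a11 a12 a13 a21 a22 a23 a32 a33 m n : ℤ) :
    ((Hmat a11 a12 a13 a21 a22 a23 a32 a33 m n).map (Int.cast : ℤ → ℝ)).col 0 =
      ![(a11 : ℝ), (a21 : ℝ), 0] := by
  ext i
  fin_cases i <;> simp [Hmat]

theorem Hmat_sub_map_intCast (a11 a12 a13 a21 a22 a23 a32 a33 m n t : ℤ) :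
    (Hmat a11 a12 a13 a21 a22 a23 a32 a33 (m - t) n).map (Int.cast : ℤ → ℝ) =
      (Hmat a11 a12 a13 a21 a22 a23 a32 a33 m n).map Int.cast * transvection 0 2 (-(t : ℝ)) := by
  ext i j
  fin_cases i <;> fin_cases j <;> simp [Hmat] <;> ring

/-- For NRS-rays of direction (−1,0) of a general Hessenberg type: the convex
hull of the orbits of (1,0,0) and (a11,a21,0) eventually lies in the ε-tubular
neighborhood of the triangle (1,0,0), (a11,a21,0), (−a11,−a21,0). -/
theorem orbit_hull_flattens_general_dir_neg
    (a11 a12 a13 a21 a22 a23 a32 a33 : ℤ)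
    (hdet : (Hmat a11 a12 a13 a21 a22 a23 a32 a33 0 0).det = 1)
    (ha21 : 0 < a21) (ha32 : 0 < a32) (m n : ℤ)
    (hray : ∀ t : ℤ, 0 ≤ t →
      HasNRSSpectrum
        ((Hmat a11 a12 a13 a21 a22 a23 a32 a33 (m - t) n).map (Int.cast : ℤ → ℝ))) :
    ∀ ε : ℝ, 0 < ε → ∃ C : ℝ, 0 < C ∧
      ∀ t : ℤ, C < (t : ℝ) →
        ∀ g1 g2 g3 : Fin 3 → ℝ,
          IsEigenbasis
            ((Hmat a11 a12 a13 a21 a22 a23 a32 a33 (m - t) n).map (Int.cast : ℤ → ℝ))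
            g1 g2 g3 →
          convexHull ℝ
              (KVorbit g1 g2 g3 ![1, 0, 0] ∪
                KVorbit g1 g2 g3 ![(a11 : ℝ), (a21 : ℝ), 0]) ⊆
            tubNbhd ε
              (convexHull ℝ
                {![1, 0, 0], ![(a11 : ℝ), (a21 : ℝ), 0],
                  ![(-a11 : ℝ), (-a21 : ℝ), 0]}) := by
  intro ε hε
  obtain ⟨C, hC, h⟩ := orbit_hull_flattens_general_dir_neg_general
    ((Hmat a11 a12 a13 a21 a22 a23 a32 a33 m n).map Int.cast) (by simp [Hmat])
    (by simp [Hmat, ha21, ha32]) hε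
  refine ⟨C, hC, fun t ht g1 g2 g3 hg => ?_⟩
  rw [Hmat_sub_map_intCast] at hg
  simpa [Hmat_map_intCast_col_zero] using h t ht g1 g2 g3 hg
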